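/- Let G be a group acting on a poset P by order-preserving automorphisms, and suppose for each σ ∈ P we are given a subgroup Δ_σ ≤ G satisfying: (i) Δ_σ ⊆ Δ_τ whenever τ ≤ σ, and (ii) γ Δ_σ γ⁻¹ = Δ_{γ·σ} for all γ ∈ G and σ ∈ P. Then there is a well-defined category CL with objects the elements of P, with Hom(σ,τ) = {γ ∈ G : γ·σ ≤ τ}/Δ_σ (right cosets γΔ_σ), and with composition induced by multiplication of representatives in G; i.e., composition is well defined on cosets, is associative, and the coset of the identity element is an identity morphism. -/

import Mathlib

/-!
Only the compatibility of composition with cosets requires an argument. Write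
`(δγ)⁻¹(δ'γ') = γ⁻¹(δ⁻¹δ')γ · γ⁻¹γ'`. If `γ • σ ≤ τ`, then (i) and (ii) give
`Δ_τ ≤ Δ_{γ • σ} = γΔ_σγ⁻¹`, so conjugating `δ⁻¹δ' ∈ Δ_τ` by `γ⁻¹` lands in `Δ_σ`.
-/

open scoped Pointwise

theorem mul_smul_le_of_smul_le_of_smul_le {M P : Type*} [Monoid M] [Preorder P] [MulAction M P]
    {γ δ : M} {σ τ ρ : P} (hδ_mono : Monotone (fun x : P => δ • x))
    (hγ : γ • σ ≤ τ) (hδ : δ • τ ≤ ρ) : (δ * γ) • σ ≤ ρ :=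
  calc
    (δ * γ) • σ = δ • γ • σ := mul_smul δ γ σ
    _ ≤ δ • τ := hδ_mono hγ
    _ ≤ ρ := hδ

section Subgroup

variable {G : Type*} [Group G] {H K : Subgroup G}

theorem mem_conj_smul_iff_inv_mul_mul_mem {g d : G} :
    d ∈ MulAut.conj g • H ↔ g⁻¹ * d * g ∈ H := by
  simp [Subgroup.mem_pointwise_smul_iff_inv_smul_mem]

theorem eq_conj_smul_of_forall_mem_iff {g : G} (h : ∀ d, d ∈ H ↔ g * d * g⁻¹ ∈ K) :
    K = MulAut.conj g • H := by
  ext d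
  simp [mem_conj_smul_iff_inv_mul_mul_mem, h, mul_assoc]

theorem mul_inv_mul_mul_mem_of_le_conj_smul {γ γ' δ δ' : G} (hK : K ≤ MulAut.conj γ • H)
    (hγ : γ⁻¹ * γ' ∈ H) (hδ : δ⁻¹ * δ' ∈ K) : (δ * γ)⁻¹ * (δ' * γ') ∈ H := by
  have hconj : γ⁻¹ * (δ⁻¹ * δ') * γ ∈ H :=
    mem_conj_smul_iff_inv_mul_mul_mem.mp (hK hδ)
  have hfactor : (δ * γ)⁻¹ * (δ' * γ') = γ⁻¹ * (δ⁻¹ * δ') * γ * (γ⁻¹ * γ') := by group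
  exact hfactor ▸ H.mul_mem hconj hγ

end Subgroup

theorem stmt_1_general {G P : Type*} [Group G] [Preorder P] [MulAction G P]
    (hmono : ∀ g : G, Monotone (fun x : P => g • x)) {Δ : P → Subgroup G}
    (hanti : Antitone Δ) (hconj : ∀ (g : G) (σ : P), Δ (g • σ) = MulAut.conj g • Δ σ) :
    (∀ (σ τ ρ : P) (γ γ' δ δ' : G), γ • σ ≤ τ → γ' • σ ≤ τ → δ • τ ≤ ρ → δ' • τ ≤ ρ →
      γ⁻¹ * γ' ∈ Δ σ → δ⁻¹ * δ' ∈ Δ τ →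
      ((δ * γ) • σ ≤ ρ ∧ (δ * γ)⁻¹ * (δ' * γ') ∈ Δ σ)) ∧
    (∀ σ : P, (1 : G) • σ ≤ σ) ∧
    (∀ (σ τ : P) (γ : G), γ • σ ≤ τ → ((γ * 1)⁻¹ * γ ∈ Δ σ ∧ (1 * γ)⁻¹ * γ ∈ Δ σ)) ∧
    (∀ (σ : P) (γ δ ε : G), ((ε * δ) * γ)⁻¹ * (ε * (δ * γ)) ∈ Δ σ) := by
  refine ⟨fun σ τ ρ γ γ' δ δ' hγ _ hδ _ hγγ' hδδ' => ⟨?_, ?_⟩,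
    fun σ => (one_smul G σ).le, fun σ τ γ _ => ?_, fun σ γ δ ε => ?_⟩
  · exact mul_smul_le_of_smul_le_of_smul_le (hmono δ) hγ hδ
  · have hΔ : Δ τ ≤ MulAut.conj γ • Δ σ := (hanti hγ).trans_eq (hconj γ σ)
    exact mul_inv_mul_mul_mem_of_le_conj_smul hΔ hγγ' hδδ'
  · simp
  · simp [mul_assoc]

/-- Well-definedness of the Charney–Lee category `CL`: objects are the elements of the
poset `P`, morphisms `σ → τ` are right cosets `γΔ_σ` of elements `γ ∈ G` with `γ • σ ≤ τ`,
and composition is induced by multiplication in `G`.  We assert: composition is well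
defined on cosets and lands in the correct hom-set, the identity element represents an
identity morphism (unit laws hold), and composition is associative. -/
theorem stmt_1 {G P : Type*} [Group G] [PartialOrder P] [MulAction G P]
    (hmono : ∀ g : G, Monotone (fun x : P => g • x))
    (Δ : P → Subgroup G)
    (hΔ1 : ∀ σ τ : P, τ ≤ σ → Δ σ ≤ Δ τ)
    (hΔ2 : ∀ (g : G) (σ : P) (d : G), d ∈ Δ σ ↔ g * d * g⁻¹ ∈ Δ (g • σ)) :
    -- composition is well defined on cosets: if `γΔ_σ = γ'Δ_σ` and `δΔ_τ = δ'Δ_τ`, then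
    -- the composite `δγ` satisfies `(δγ) • σ ≤ ρ` and `(δγ)Δ_σ = (δ'γ')Δ_σ`
    (∀ (σ τ ρ : P) (γ γ' δ δ' : G), γ • σ ≤ τ → γ' • σ ≤ τ → δ • τ ≤ ρ → δ' • τ ≤ ρ →
      γ⁻¹ * γ' ∈ Δ σ → δ⁻¹ * δ' ∈ Δ τ →
      ((δ * γ) • σ ≤ ρ ∧ (δ * γ)⁻¹ * (δ' * γ') ∈ Δ σ)) ∧
    -- the identity element of `G` represents an endomorphism of every object
    (∀ σ : P, (1 : G) • σ ≤ σ) ∧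
    -- unit laws: composing with the coset of `1` on either side gives back `γΔ_σ`
    (∀ (σ τ : P) (γ : G), γ • σ ≤ τ → ((γ * 1)⁻¹ * γ ∈ Δ σ ∧ (1 * γ)⁻¹ * γ ∈ Δ σ)) ∧
    -- associativity of composition on representatives
    (∀ (σ : P) (γ δ ε : G), ((ε * δ) * γ)⁻¹ * (ε * (δ * γ)) ∈ Δ σ) :=
  stmt_1_general hmono (fun τ σ h => hΔ1 σ τ h)
    fun g σ => eq_conj_smul_of_forall_mem_iff (hΔ2 g σ)
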